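/- (Covering lemma.) Let d ≥ 1 and let f : ℝ^d → ℝ be measurable with 0 ≤ f, integrable, with compact support, and suppose ∫_{ℝ^d} f ≥ Λ for some Λ > 0. Then the support of f can be covered by a countable collection {Q_i} of pairwise disjoint half-open cubes in ℝ^d such that ∫_{Q_i} f ≤ Λ for every i, and such that for all a > 0 and all q with 0 ≤ q < Λ 2^{−d}, setting b := (1 − 2^d q/Λ)(2^{da} − 1)/(2^{da} + 2^d − 2) > 0, one has the inequality of (extended-nonnegative-real-valued) sums ∑_i |Q_i|^{−a} (∫_{Q_i} f − q)_+ ≥ b · ∑_i |Q_i|^{−a} ∫_{Q_i} f, where (t)_+ := max{t, 0}. -/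

import Mathlib

/-!
Write `m(Q) = ∫_Q f`. Start from a cube containing the support of `f` and halve every cube with
`m(Q) > Λ`; by absolute continuity of the integral this stops after finitely many generations.
Weight a cube by `|Q|⁻ᵖ` and let `E(Q)` be the sum of `|Q'|⁻ᵖ ((m(Q') - q)₊ - b m(Q'))` over the
final cubes `Q' ⊆ Q`. By induction from the bottom, every halved cube of weight `v` satisfies
`E(Q) ≥ w r v`, where `w = 2 ^ (d p)` and `r = (1 - b) Λ - 2 ^ d q`. Indeed its `2 ^ d` children
have weight `w v`. If none of them is halved, they contribute at least `w v r` because their total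
mass is at least `Λ`; if one is, it contributes `w² v r` and each of the others loses at most
`w v b Λ`. The constant `b` is exactly the one for which `w r - (2 ^ d - 1) b Λ = r`, so both cases
give the same bound.
-/

open MeasureTheory

/-- The half-open axis-parallel cube in `ℝ^d` with corner `c` and side length `a`. -/
def cube (d : ℕ) (c : Fin d → ℝ) (a : ℝ) : Set (Fin d → ℝ) :=
  {x | ∀ i, c i ≤ x i ∧ x i < c i + a}

/-- The regime of the covering lemma: a cube has `K` children, the weight of a child is `w` times
that of its parent, cubes of mass above `Λ` are halved and the mass `q` is lost per cube. -/
structure IsAdmissible (K w Λ q : ℝ) : Prop where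
  one_le_branching : 1 ≤ K
  one_lt_ratio : 1 < w
  threshold_pos : 0 < Λ
  loss_nonneg : 0 ≤ q
  loss_lt : q < Λ / K

/-- The constant `b` of the covering lemma, for branching number `K` and weight ratio `w`. -/
noncomputable def coveringConst (K w Λ q : ℝ) : ℝ :=
  (1 - K * q / Λ) * (w - 1) / (w + K - 2)

/-- The net excess that `K` cubes of total mass `Λ` and unit weight have in the worst case, each of
them losing `q` and the fraction `b` of its mass. -/
noncomputable def reserve (K w Λ q : ℝ) : ℝ :=
  (1 - coveringConst K w Λ q) * Λ - K * q

/-- The net excess `(t - q)₊ - b t` of a cube of mass `t` and unit weight. -/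
noncomputable def netExcess (K w Λ q t : ℝ) : ℝ :=
  max (t - q) 0 - coveringConst K w Λ q * t

open Classical in
/-- A lower bound for the total net excess of the cells inside a cube of mass `t` and unit weight:
below the threshold the cube is itself a cell, above it the cube is halved. -/
noncomputable def stoppingBound (K w Λ q t : ℝ) : ℝ :=
  if t ≤ Λ then netExcess K w Λ q t else w * reserve K w Λ q

namespace IsAdmissible

variable {K w Λ q : ℝ}

lemma denominator_pos (h : IsAdmissible K w Λ q) : 0 < w + K - 2 := by
  linarith [h.one_le_branching, h.one_lt_ratio]

lemma one_sub_div_pos (h : IsAdmissible K w Λ q) : 0 < 1 - K * q / Λ := by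
  have hKq : q * K < Λ := (lt_div_iff₀ (by linarith [h.one_le_branching])).1 h.loss_lt
  rw [sub_pos, div_lt_one h.threshold_pos]
  linarith

lemma coveringConst_pos (h : IsAdmissible K w Λ q) : 0 < coveringConst K w Λ q :=
  div_pos (mul_pos h.one_sub_div_pos (sub_pos.2 h.one_lt_ratio)) h.denominator_pos

lemma reserve_nonneg (h : IsAdmissible K w Λ q) : 0 ≤ reserve K w Λ q := by
  have hb : coveringConst K w Λ q ≤ 1 - K * q / Λ := by
    rw [coveringConst, div_le_iff₀ h.denominator_pos]
    exact mul_le_mul_of_nonneg_left (by linarith [h.one_le_branching]) h.one_sub_div_pos.le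
  calc (0 : ℝ) ≤ (1 - K * q / Λ - coveringConst K w Λ q) * Λ :=
        mul_nonneg (sub_nonneg.2 hb) h.threshold_pos.le
    _ = reserve K w Λ q := by
        rw [reserve]
        field_simp [h.threshold_pos.ne']
        ring

lemma coveringConst_le_one (h : IsAdmissible K w Λ q) : coveringConst K w Λ q ≤ 1 := by
  have hKq : 0 ≤ K * q := mul_nonneg (by linarith [h.one_le_branching]) h.loss_nonneg
  have hr := h.reserve_nonneg
  rw [reserve] at hr
  exact sub_nonneg.1 (nonneg_of_mul_nonneg_left (by linarith) h.threshold_pos)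

lemma reserve_balance (h : IsAdmissible K w Λ q) :
    w * reserve K w Λ q - (K - 1) * (coveringConst K w Λ q * Λ) = reserve K w Λ q := by
  have hden := h.denominator_pos.ne'
  have hΛ := h.threshold_pos.ne'
  rw [reserve, coveringConst]
  field_simp
  ring

lemma neg_le_stoppingBound (h : IsAdmissible K w Λ q) (t : ℝ) :
    -(coveringConst K w Λ q * Λ) ≤ stoppingBound K w Λ q t := by
  have hb := h.coveringConst_pos.le
  rw [stoppingBound]
  split_ifs with ht
  · have hbt := mul_le_mul_of_nonneg_left ht hb
    rw [netExcess]
    linarith [le_max_right (t - q) 0]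
  · have hbΛ := mul_nonneg hb h.threshold_pos.le
    have hwr := mul_nonneg (zero_le_one.trans h.one_lt_ratio.le) h.reserve_nonneg
    linarith

lemma stoppingBound_nonneg (h : IsAdmissible K w Λ q) {t : ℝ} (ht : Λ ≤ t) :
    0 ≤ stoppingBound K w Λ q t := by
  have hr := h.reserve_nonneg
  rw [stoppingBound]
  split_ifs with htΛ
  · obtain rfl : t = Λ := le_antisymm htΛ ht
    have hq : q ≤ K * q := le_mul_of_one_le_left h.loss_nonneg h.one_le_branching
    rw [reserve] at hr
    rw [netExcess]
    linarith [le_max_left (t - q) 0]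
  · exact mul_nonneg (zero_le_one.trans h.one_lt_ratio.le) hr

variable {σ : Type*} [Fintype σ] {m : σ → ℝ}

lemma reserve_le_sum_netExcess (h : IsAdmissible K w Λ q) (hK : (Fintype.card σ : ℝ) = K)
    (hm : Λ ≤ ∑ s, m s) : reserve K w Λ q ≤ ∑ s, netExcess K w Λ q (m s) := by
  set b := coveringConst K w Λ q
  calc reserve K w Λ q = (1 - b) * Λ - K * q := rfl
    _ ≤ (1 - b) * ∑ s, m s - K * q := by
        gcongr
        exact sub_nonneg.2 h.coveringConst_le_one
    _ = ∑ s, ((m s - q) - b * m s) := by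
        simp only [Finset.sum_sub_distrib, ← Finset.mul_sum, Finset.sum_const, Finset.card_univ,
          nsmul_eq_mul, hK]
        ring
    _ ≤ ∑ s, netExcess K w Λ q (m s) :=
        Finset.sum_le_sum fun s _ => sub_le_sub_right (le_max_left _ _) _

lemma reserve_le_sum_stoppingBound_of_lt (h : IsAdmissible K w Λ q)
    (hK : (Fintype.card σ : ℝ) = K) {s₀ : σ} (hs₀ : Λ < m s₀) :
    reserve K w Λ q ≤ ∑ s, stoppingBound K w Λ q (m s) := by
  classical
  have hcard : ((Finset.univ.erase s₀).card : ℝ) = K - 1 := by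
    rw [Finset.cast_card_erase_of_mem (Finset.mem_univ s₀), Finset.card_univ, hK]
  have hothers : -((K - 1) * (coveringConst K w Λ q * Λ)) ≤
      ∑ s ∈ Finset.univ.erase s₀, stoppingBound K w Λ q (m s) := by
    have := Finset.card_nsmul_le_sum (Finset.univ.erase s₀) _ _
      fun s _ => h.neg_le_stoppingBound (m s)
    rwa [nsmul_eq_mul, hcard, mul_neg] at this
  have hbound : stoppingBound K w Λ q (m s₀) = w * reserve K w Λ q := if_neg hs₀.not_ge
  rw [← Finset.add_sum_erase _ _ (Finset.mem_univ s₀), hbound]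
  linarith [h.reserve_balance]

lemma reserve_le_sum_stoppingBound (h : IsAdmissible K w Λ q) (hK : (Fintype.card σ : ℝ) = K)
    (hm : Λ ≤ ∑ s, m s) : reserve K w Λ q ≤ ∑ s, stoppingBound K w Λ q (m s) := by
  by_cases hall : ∀ s, m s ≤ Λ
  · simpa only [stoppingBound, hall, if_true] using h.reserve_le_sum_netExcess hK hm
  · push Not at hall
    obtain ⟨s₀, hs₀⟩ := hall
    exact h.reserve_le_sum_stoppingBound_of_lt hK hs₀

end IsAdmissible

lemma isAdmissible_two_pow {d : ℕ} (hd : 1 ≤ d) {Λ p q : ℝ} (hΛ : 0 < Λ) (hp : 0 < p)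
    (hq : 0 ≤ q) (hqΛ : q < Λ / 2 ^ d) : IsAdmissible (2 ^ d) (2 ^ ((d : ℝ) * p)) Λ q where
  one_le_branching := one_le_pow₀ one_le_two
  one_lt_ratio := Real.one_lt_rpow one_lt_two (mul_pos (by exact_mod_cast hd) hp)
  threshold_pos := hΛ
  loss_nonneg := hq
  loss_lt := hqΛ

section Cube

variable {d : ℕ}

lemma cube_eq_pi (c : Fin d → ℝ) (a : ℝ) :
    cube d c a = Set.univ.pi fun i => Set.Ico (c i) (c i + a) := by
  ext x
  simp only [cube, Set.mem_ofPred_eq, Set.mem_univ_pi, Set.mem_Ico]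

lemma measurableSet_cube (c : Fin d → ℝ) (a : ℝ) : MeasurableSet (cube d c a) := by
  rw [cube_eq_pi]
  exact MeasurableSet.univ_pi fun _ => measurableSet_Ico

lemma volume_cube (c : Fin d → ℝ) (a : ℝ) : volume (cube d c a) = ENNReal.ofReal a ^ d := by
  simp only [cube_eq_pi, Real.volume_pi_Ico, add_sub_cancel_left, Finset.prod_const,
    Finset.card_univ, Fintype.card_fin]

lemma disjoint_cube_of_disjoint_Ico {c c' : Fin d → ℝ} {a a' : ℝ} (i : Fin d)
    (h : Disjoint (Set.Ico (c i) (c i + a)) (Set.Ico (c' i) (c' i + a'))) :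
    Disjoint (cube d c a) (cube d c' a') := by
  rw [cube_eq_pi, cube_eq_pi]
  exact Set.disjoint_univ_pi.2 ⟨i, h⟩

lemma exists_cube_superset {s : Set (Fin d → ℝ)} (hs : Bornology.IsBounded s) :
    ∃ (c : Fin d → ℝ) (a : ℝ), 0 < a ∧ s ⊆ cube d c a := by
  obtain ⟨R, hR, hsR⟩ := hs.subset_ball_lt 0 0
  refine ⟨fun _ => -R, 2 * R, by positivity, fun x hx i => ?_⟩
  have hxi : |x i| < R := (norm_le_pi_norm x i).trans_lt (mem_ball_zero_iff.1 (hsR hx))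
  obtain ⟨hl, hu⟩ := abs_lt.1 hxi
  constructor <;> linarith

lemma pairwise_disjoint_cube_translates (hd : 1 ≤ d) (c : Fin d → ℝ) (a : ℝ) :
    Pairwise fun k l : ℕ =>
      Disjoint (cube d (fun i => c i + k * a) a) (cube d (fun i => c i + l * a) a) := by
  intro k l hkl
  refine disjoint_cube_of_disjoint_Ico ⟨0, hd⟩ ?_
  simpa [Function.onFun, add_mul, add_assoc] using
    Set.pairwise_disjoint_Ico_add_zsmul (c ⟨0, hd⟩) a (Nat.cast_injective.ne hkl)

/-- The corner of the child selected by `s` when the cube with corner `c` and side `a` is halved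
in every direction; `s i` tells whether the child lies in the upper half of direction `i`. -/
noncomputable def childCorner (c : Fin d → ℝ) (a : ℝ) (s : Fin d → Bool) : Fin d → ℝ :=
  fun i => if s i then c i + a / 2 else c i

lemma pairwise_disjoint_children (c : Fin d → ℝ) (a : ℝ) :
    Pairwise fun s t : Fin d → Bool =>
      Disjoint (cube d (childCorner c a s) (a / 2)) (cube d (childCorner c a t) (a / 2)) := by
  intro s t hst
  obtain ⟨i, hi⟩ := Function.ne_iff.1 hst
  refine disjoint_cube_of_disjoint_Ico i ?_
  cases hs : s i <;> cases ht : t i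
  · exact absurd (hs.trans ht.symm) hi
  · simp [childCorner, hs, ht]
  · simp [childCorner, hs, ht]
  · exact absurd (hs.trans ht.symm) hi

lemma iUnion_children (c : Fin d → ℝ) {a : ℝ} (ha : 0 ≤ a) :
    ⋃ s, cube d (childCorner c a s) (a / 2) = cube d c a := by
  let half (i : Fin d) (upper : Bool) : Set ℝ :=
    Set.Ico (if upper then c i + a / 2 else c i) ((if upper then c i + a / 2 else c i) + a / 2)
  have hhalves : ∀ i, ⋃ upper, half i upper = Set.Ico (c i) (c i + a) := by
    intro i
    rw [← Set.iSup_eq_iUnion, iSup_bool_eq, sup_comm]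
    simp only [half, if_true, Bool.false_eq_true, if_false, Set.sup_eq_union]
    rw [Set.Ico_union_Ico_eq_Ico (by linarith) (by linarith), add_assoc, add_halves]
  simp only [cube_eq_pi, childCorner, ← hhalves]
  exact Set.iUnion_univ_pi half

lemma sum_setIntegral_children {f : (Fin d → ℝ) → ℝ} {μ : Measure (Fin d → ℝ)}
    (hf : Integrable f μ) (c : Fin d → ℝ) {a : ℝ} (ha : 0 ≤ a) :
    ∑ s, ∫ x in cube d (childCorner c a s) (a / 2), f x ∂μ = ∫ x in cube d c a, f x ∂μ := by
  rw [← iUnion_children c ha, integral_iUnion_fintype (fun _ => measurableSet_cube _ _)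
    (pairwise_disjoint_children c a) fun _ => hf.integrableOn]

lemma setIntegral_eq_zero_of_disjoint_of_support_subset {α E : Type*} [MeasurableSpace α]
    [NormedAddCommGroup E] [NormedSpace ℝ E] {f : α → E} {μ : Measure α} {s t : Set α}
    (hf : Function.support f ⊆ s) (hst : Disjoint s t) : ∫ x in t, f x ∂μ = 0 :=
  setIntegral_eq_zero_of_forall_eq_zero fun _ hx =>
    Function.notMem_support.1 fun hxf => Set.disjoint_left.1 hst (hf hxf) hx

lemma weight_half (d : ℕ) {a : ℝ} (ha : 0 ≤ a) (p : ℝ) :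
    ((a / 2) ^ d) ^ (-p) = (2 : ℝ) ^ ((d : ℝ) * p) * (a ^ d) ^ (-p) := by
  rw [div_pow, Real.div_rpow (by positivity) (by positivity), Real.rpow_mul zero_le_two,
    Real.rpow_natCast, Real.rpow_neg (x := (2 : ℝ) ^ d) (by positivity), div_inv_eq_mul, mul_comm]

lemma exists_forall_setIntegral_cube_le (hd : 1 ≤ d) {f : (Fin d → ℝ) → ℝ} (hf : Integrable f)
    {ε : ℝ} (hε : 0 < ε) (a : ℝ) : ∃ n : ℕ, ∀ c, ∫ x in cube d c (a / 2 ^ n), f x ≤ ε := by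
  by_contra! hlarge
  choose c hc using hlarge
  have hside : Filter.Tendsto (fun n : ℕ => a / 2 ^ n) Filter.atTop (nhds 0) :=
    tendsto_const_nhds.div_atTop (tendsto_pow_atTop_atTop_of_one_lt one_lt_two)
  have hvol : Filter.Tendsto (fun n => volume (cube d (c n) (a / 2 ^ n))) Filter.atTop
      (nhds 0) := by
    simpa only [volume_cube, ENNReal.ofReal_zero, zero_pow (Nat.one_le_iff_ne_zero.1 hd)] using
      ENNReal.Tendsto.pow (n := d) (ENNReal.tendsto_ofReal hside)
  obtain ⟨n, hn⟩ := ((hf.tendsto_setIntegral_nhds_zero hvol).eventually (gt_mem_nhds hε)).exists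
  exact (hc n).not_gt hn

end Cube

/-- A partition of the cube with corner `c` and side length `a` into finitely many cubes. -/
structure CubePartition {d : ℕ} (c : Fin d → ℝ) (a : ℝ) where
  Index : Type
  [fintypeIndex : Fintype Index]
  corner : Index → Fin d → ℝ
  side : Index → ℝ
  side_pos : ∀ i, 0 < side i
  pairwise_disjoint :
    Pairwise fun i j => Disjoint (cube d (corner i) (side i)) (cube d (corner j) (side j))
  iUnion_eq : ⋃ i, cube d (corner i) (side i) = cube d c a

namespace CubePartition

attribute [instance] fintypeIndex

variable {d : ℕ} {c : Fin d → ℝ} {a : ℝ}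

/-- The `i`-th cube of the partition. -/
def cell (P : CubePartition c a) (i : P.Index) : Set (Fin d → ℝ) :=
  cube d (P.corner i) (P.side i)

lemma cell_subset (P : CubePartition c a) (i : P.Index) : P.cell i ⊆ cube d c a :=
  (Set.subset_iUnion P.cell i).trans P.iUnion_eq.subset

/-- The sum of `|Q|⁻ᵖ g(Q)` over the cells `Q` of the partition. -/
noncomputable def weightedSum (P : CubePartition c a) (p : ℝ) (g : Set (Fin d → ℝ) → ℝ) : ℝ :=
  ∑ i, (P.side i ^ d) ^ (-p) * g (P.cell i)

lemma weightedSum_sub_const_mul (P : CubePartition c a) (p b : ℝ)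
    (g h : Set (Fin d → ℝ) → ℝ) :
    P.weightedSum p (fun Q => g Q - b * h Q) = P.weightedSum p g - b * P.weightedSum p h := by
  simp only [weightedSum, mul_sub, Finset.sum_sub_distrib, Finset.mul_sum, mul_left_comm]

/-- The partition of a cube into itself. -/
def single (c : Fin d → ℝ) (ha : 0 < a) : CubePartition c a where
  Index := Unit
  corner _ := c
  side _ := a
  side_pos _ := ha
  pairwise_disjoint _ _ hij := absurd rfl hij
  iUnion_eq := Set.iUnion_const _

lemma weightedSum_single (c : Fin d → ℝ) (ha : 0 < a) (p : ℝ) (g : Set (Fin d → ℝ) → ℝ) :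
    (single c ha).weightedSum p g = (a ^ d) ^ (-p) * g (cube d c a) :=
  Fintype.sum_unique (ι := Unit) _

/-- The partition obtained by halving the cube and partitioning each of its children. -/
noncomputable def subdivide (ha : 0 < a)
    (P : ∀ s : Fin d → Bool, CubePartition (childCorner c a s) (a / 2)) : CubePartition c a where
  Index := Σ s, (P s).Index
  corner i := (P i.1).corner i.2
  side i := (P i.1).side i.2
  side_pos i := (P i.1).side_pos i.2
  pairwise_disjoint := by
    rintro ⟨s, i⟩ ⟨t, j⟩ hij
    by_cases hst : s = t
    · subst hst
      exact (P s).pairwise_disjoint fun h => hij (congrArg (Sigma.mk s) h)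
    · exact (pairwise_disjoint_children c a hst).mono ((P s).cell_subset i) ((P t).cell_subset j)
  iUnion_eq := by
    rw [← iUnion_children c ha.le, Set.iUnion_sigma]
    exact Set.iUnion_congr fun s => (P s).iUnion_eq

lemma weightedSum_subdivide (ha : 0 < a)
    (P : ∀ s : Fin d → Bool, CubePartition (childCorner c a s) (a / 2)) (p : ℝ)
    (g : Set (Fin d → ℝ) → ℝ) :
    (subdivide ha P).weightedSum p g = ∑ s, (P s).weightedSum p g :=
  Fintype.sum_sigma _

section Stopping

variable {m : Set (Fin d → ℝ) → ℝ} {Λ : ℝ}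

open Classical in
/-- Halve the cubes with `m Q > Λ`, at most `n` times. -/
noncomputable def stopping (m : Set (Fin d → ℝ) → ℝ) (Λ : ℝ) :
    ℕ → ∀ (c : Fin d → ℝ) {a : ℝ}, 0 < a → CubePartition c a
  | 0, c, _, ha => single c ha
  | n + 1, c, a, ha =>
    if m (cube d c a) ≤ Λ then single c ha
    else subdivide ha fun s => stopping m Λ n (childCorner c a s) (half_pos ha)

lemma stopping_of_le (n : ℕ) (ha : 0 < a) (hm : m (cube d c a) ≤ Λ) :
    stopping m Λ n c ha = single c ha := by
  cases n with
  | zero => rfl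
  | succ n => rw [stopping, if_pos hm]

lemma stopping_succ_of_lt (n : ℕ) (ha : 0 < a) (hm : Λ < m (cube d c a)) :
    stopping m Λ (n + 1) c ha =
      subdivide ha fun s => stopping m Λ n (childCorner c a s) (half_pos ha) := by
  rw [stopping, if_neg hm.not_ge]

lemma stopping_cell_le {n : ℕ} (ha : 0 < a) (hsmall : ∀ c, m (cube d c (a / 2 ^ n)) ≤ Λ) :
    ∀ i, m ((stopping m Λ n c ha).cell i) ≤ Λ := by
  induction n generalizing c a with
  | zero =>
    rw [pow_zero, div_one] at hsmall
    exact fun _ => hsmall c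
  | succ n ih =>
    rcases le_or_gt (m (cube d c a)) Λ with hc | hc
    · rw [stopping_of_le _ ha hc]
      exact fun _ => hc
    · rw [pow_succ', ← div_div] at hsmall
      rw [stopping_succ_of_lt n ha hc]
      exact fun i => ih (half_pos ha) hsmall i.2

lemma weight_mul_stoppingBound_le_weightedSum {p q : ℝ}
    (h : IsAdmissible (2 ^ d) (2 ^ ((d : ℝ) * p)) Λ q)
    (hm : ∀ c a, 0 < a → m (cube d c a) ≤ ∑ s, m (cube d (childCorner c a s) (a / 2)))
    {n : ℕ} (ha : 0 < a) (hsmall : ∀ c, m (cube d c (a / 2 ^ n)) ≤ Λ) :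
    (a ^ d) ^ (-p) * stoppingBound (2 ^ d) (2 ^ ((d : ℝ) * p)) Λ q (m (cube d c a)) ≤
      (stopping m Λ n c ha).weightedSum p
        fun Q => netExcess (2 ^ d) (2 ^ ((d : ℝ) * p)) Λ q (m Q) := by
  induction n generalizing c a with
  | zero =>
    rw [pow_zero, div_one] at hsmall
    rw [stopping_of_le _ ha (hsmall c), weightedSum_single, stoppingBound, if_pos (hsmall c)]
  | succ n ih =>
    rcases le_or_gt (m (cube d c a)) Λ with hc | hc
    · rw [stopping_of_le _ ha hc, weightedSum_single, stoppingBound, if_pos hc]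
    · rw [pow_succ', ← div_div] at hsmall
      rw [stopping_succ_of_lt n ha hc, weightedSum_subdivide, stoppingBound, if_neg hc.not_ge]
      calc (a ^ d) ^ (-p) * (2 ^ ((d : ℝ) * p) * reserve (2 ^ d) (2 ^ ((d : ℝ) * p)) Λ q)
          = ((a / 2) ^ d) ^ (-p) * reserve (2 ^ d) (2 ^ ((d : ℝ) * p)) Λ q := by
            rw [weight_half d ha.le]
            ring
        _ ≤ ((a / 2) ^ d) ^ (-p) * ∑ s, stoppingBound (2 ^ d) (2 ^ ((d : ℝ) * p)) Λ q
              (m (cube d (childCorner c a s) (a / 2))) := by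
            gcongr
            exact h.reserve_le_sum_stoppingBound (by simp) (hc.le.trans (hm c a ha))
        _ ≤ _ := by
            rw [Finset.mul_sum]
            exact Finset.sum_le_sum fun s _ => ih (half_pos ha) hsmall

lemma coveringConst_mul_weightedSum_le {p q : ℝ}
    (h : IsAdmissible (2 ^ d) (2 ^ ((d : ℝ) * p)) Λ q)
    (hm : ∀ c a, 0 < a → m (cube d c a) ≤ ∑ s, m (cube d (childCorner c a s) (a / 2)))
    {n : ℕ} (ha : 0 < a) (hsmall : ∀ c, m (cube d c (a / 2 ^ n)) ≤ Λ)
    (hmass : Λ ≤ m (cube d c a)) :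
    coveringConst (2 ^ d) (2 ^ ((d : ℝ) * p)) Λ q * (stopping m Λ n c ha).weightedSum p m ≤
      (stopping m Λ n c ha).weightedSum p fun Q => max (m Q - q) 0 := by
  rw [← sub_nonneg, ← weightedSum_sub_const_mul]
  exact (mul_nonneg (by positivity) (h.stoppingBound_nonneg hmass)).trans
    (weight_mul_stoppingBound_le_weightedSum h hm ha hsmall)

end Stopping

/-- A sequence of pairwise disjoint cubes containing all cells of `P`, its other terms lying outside
the partitioned cube. -/
structure Extension (P : CubePartition c a) where
  corner : ℕ → Fin d → ℝ
  side : ℕ → ℝ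
  side_pos : ∀ n, 0 < side n
  pairwise_disjoint :
    Pairwise fun i j => Disjoint (cube d (corner i) (side i)) (cube d (corner j) (side j))
  index : P.Index ↪ ℕ
  corner_index : ∀ i, corner (index i) = P.corner i
  side_index : ∀ i, side (index i) = P.side i
  disjoint_of_notMem_range :
    ∀ n ∉ Set.range index, Disjoint (cube d c a) (cube d (corner n) (side n))

lemma nonempty_extension (hd : 1 ≤ d) (ha : 0 < a) (P : CubePartition c a) :
    Nonempty P.Extension := by
  obtain ⟨e⟩ : Nonempty (ℕ ≃ P.Index ⊕ ℕ) :=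
    have : Countable P.Index := Finite.to_countable
    nonempty_equiv_of_countable
  let corner : P.Index ⊕ ℕ → Fin d → ℝ :=
    Sum.elim P.corner fun k i => c i + ((k + 1 : ℕ) : ℝ) * a
  let side : P.Index ⊕ ℕ → ℝ := Sum.elim P.side fun _ => a
  have hside : ∀ x, 0 < side x := by
    rintro (i | _)
    exacts [P.side_pos i, ha]
  have htranslates := pairwise_disjoint_cube_translates hd c a
  have houtside : ∀ k, Disjoint (cube d c a) (cube d (corner (.inr k)) (side (.inr k))) := by
    intro k
    simpa [corner, side] using htranslates (Nat.succ_ne_zero k).symm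
  have hdisjoint : Pairwise fun x y =>
      Disjoint (cube d (corner x) (side x)) (cube d (corner y) (side y)) := by
    rintro (i | k) (j | l) hxy
    · exact P.pairwise_disjoint fun h => hxy (congrArg Sum.inl h)
    · exact (houtside l).mono_left (P.cell_subset i)
    · exact ((houtside k).mono_left (P.cell_subset j)).symm
    · exact htranslates fun h => hxy (congrArg Sum.inr (Nat.succ_injective h))
  exact ⟨{
    corner := corner ∘ e
    side := side ∘ e
    side_pos := fun n => hside (e n)
    pairwise_disjoint := fun i j hij => hdisjoint (e.injective.ne hij)
    index := Function.Embedding.inl.trans e.symm.toEmbedding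
    corner_index := fun i => by simp [corner]
    side_index := fun i => by simp [side]
    disjoint_of_notMem_range := fun n hn => by
      rcases hx : e n with i | k
      · exact absurd ⟨i, by simp [← hx]⟩ hn
      · simpa only [Function.comp_apply, hx] using houtside k }⟩

namespace Extension

variable {P : CubePartition c a}

lemma cube_index (E : P.Extension) (i : P.Index) :
    cube d (E.corner (E.index i)) (E.side (E.index i)) = P.cell i := by
  rw [E.corner_index, E.side_index, cell]

lemma subset_iUnion (E : P.Extension) : cube d c a ⊆ ⋃ n, cube d (E.corner n) (E.side n) := by
  rw [← P.iUnion_eq]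
  refine Set.iUnion_subset fun i => ?_
  rw [← cell, ← E.cube_index]
  exact Set.subset_iUnion (fun n => cube d (E.corner n) (E.side n)) (E.index i)

lemma forall_le {m : Set (Fin d → ℝ) → ℝ} {Λ : ℝ} (E : P.Extension) (hΛ : 0 ≤ Λ)
    (hcell : ∀ i, m (P.cell i) ≤ Λ) (hout : ∀ Q, Disjoint (cube d c a) Q → m Q = 0) (n : ℕ) :
    m (cube d (E.corner n) (E.side n)) ≤ Λ := by
  by_cases hn : n ∈ Set.range E.index
  · obtain ⟨i, rfl⟩ := hn
    rw [E.cube_index]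
    exact hcell i
  · exact (hout _ (E.disjoint_of_notMem_range n hn)).trans_le hΛ

lemma tsum_ofReal_eq {g : Set (Fin d → ℝ) → ℝ} (E : P.Extension) (hg : ∀ Q, 0 ≤ g Q)
    (hout : ∀ Q, Disjoint (cube d c a) Q → g Q = 0) (p : ℝ) :
    ∑' n, ENNReal.ofReal ((E.side n ^ d) ^ (-p) * g (cube d (E.corner n) (E.side n))) =
      ENNReal.ofReal (P.weightedSum p g) := by
  have hzero : ∀ n ∉ Set.range E.index,
      ENNReal.ofReal ((E.side n ^ d) ^ (-p) * g (cube d (E.corner n) (E.side n))) = 0 := by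
    intro n hn
    rw [hout _ (E.disjoint_of_notMem_range n hn), mul_zero, ENNReal.ofReal_zero]
  have hnonneg : ∀ i, 0 ≤ (P.side i ^ d) ^ (-p) * g (P.cell i) := fun i =>
    mul_nonneg (Real.rpow_nonneg (pow_nonneg (P.side_pos i).le d) _) (hg _)
  rw [← E.index.injective.tsum_eq (Function.support_subset_iff'.2 hzero), tsum_fintype,
    weightedSum, ENNReal.ofReal_sum_of_nonneg fun i _ => hnonneg i]
  exact Finset.sum_congr rfl fun i _ => by rw [E.cube_index, E.side_index]

lemma coveringConst_mul_tsum_le {m : Set (Fin d → ℝ) → ℝ} {Λ p q : ℝ} {n : ℕ} {ha : 0 < a}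
    (E : (stopping m Λ n c ha).Extension)
    (h : IsAdmissible (2 ^ d) (2 ^ ((d : ℝ) * p)) Λ q) (hnonneg : ∀ Q, 0 ≤ m Q)
    (hout : ∀ Q, Disjoint (cube d c a) Q → m Q = 0)
    (hm : ∀ c a, 0 < a → m (cube d c a) ≤ ∑ s, m (cube d (childCorner c a s) (a / 2)))
    (hsmall : ∀ c, m (cube d c (a / 2 ^ n)) ≤ Λ) (hmass : Λ ≤ m (cube d c a)) :
    ENNReal.ofReal (coveringConst (2 ^ d) (2 ^ ((d : ℝ) * p)) Λ q) *
        ∑' n, ENNReal.ofReal ((E.side n ^ d) ^ (-p) * m (cube d (E.corner n) (E.side n))) ≤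
      ∑' n, ENNReal.ofReal
        ((E.side n ^ d) ^ (-p) * max (m (cube d (E.corner n) (E.side n)) - q) 0) := by
  have hout' : ∀ Q, Disjoint (cube d c a) Q → max (m Q - q) 0 = 0 := fun Q hQ =>
    max_eq_right (by linarith [hout Q hQ, h.loss_nonneg])
  rw [E.tsum_ofReal_eq hnonneg hout, E.tsum_ofReal_eq (fun _ => le_max_right _ _) hout',
    ← ENNReal.ofReal_mul h.coveringConst_pos.le]
  exact ENNReal.ofReal_le_ofReal (coveringConst_mul_weightedSum_le h hm ha hsmall hmass)

end Extension

end CubePartition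

/-- **Covering lemma.**
If `f ≥ 0` is integrable with compact support and `∫ f ≥ Λ > 0`, the support of `f` can be
covered by countably many pairwise disjoint half-open cubes `Q_i` with `∫_{Q_i} f ≤ Λ`, such
that for every exponent `p > 0` and every `0 ≤ q < Λ 2^{-d}`, with
`b := (1 − 2^d q/Λ)(2^{dp} − 1)/(2^{dp} + 2^d − 2) > 0`, one has
`∑_i |Q_i|^{-p} (∫_{Q_i} f − q)_+ ≥ b ∑_i |Q_i|^{-p} ∫_{Q_i} f` (as sums in `[0,∞]`). -/
theorem covering_lemma (d : ℕ) (hd : 1 ≤ d)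
    (f : (Fin d → ℝ) → ℝ) (hmeas : Measurable f) (hnonneg : ∀ x, 0 ≤ f x)
    (hint : Integrable f) (hsupp : HasCompactSupport f)
    (Λ : ℝ) (hΛ : 0 < Λ) (hmass : Λ ≤ ∫ x, f x) :
    ∃ (c : ℕ → Fin d → ℝ) (a : ℕ → ℝ),
      (∀ i, 0 < a i) ∧
      (Pairwise fun i j => Disjoint (cube d (c i) (a i)) (cube d (c j) (a j))) ∧
      (Function.support f ⊆ ⋃ i, cube d (c i) (a i)) ∧
      (∀ i, (∫ x in cube d (c i) (a i), f x) ≤ Λ) ∧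
      (∀ p : ℝ, 0 < p → ∀ q : ℝ, 0 ≤ q → q < Λ / 2 ^ d →
        0 < (1 - 2 ^ d * q / Λ) * (2 ^ ((d : ℝ) * p) - 1) /
            (2 ^ ((d : ℝ) * p) + 2 ^ d - 2) ∧
        ENNReal.ofReal ((1 - 2 ^ d * q / Λ) * (2 ^ ((d : ℝ) * p) - 1) /
              (2 ^ ((d : ℝ) * p) + 2 ^ d - 2)) *
            (∑' i, ENNReal.ofReal
              ((a i ^ d) ^ (-p) * ∫ x in cube d (c i) (a i), f x)) ≤
          ∑' i, ENNReal.ofReal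
            ((a i ^ d) ^ (-p) * max ((∫ x in cube d (c i) (a i), f x) - q) 0)) := by
  obtain ⟨c, a, ha, hsub⟩ := exists_cube_superset hsupp.isCompact.isBounded
  obtain ⟨n, hsmall⟩ := exists_forall_setIntegral_cube_le hd hint hΛ a
  let m : Set (Fin d → ℝ) → ℝ := fun Q => ∫ x in Q, f x
  have hfsub : Function.support f ⊆ cube d c a := (subset_tsupport f).trans hsub
  have hout : ∀ Q, Disjoint (cube d c a) Q → m Q = 0 := fun _ =>
    setIntegral_eq_zero_of_disjoint_of_support_subset hfsub
  have htotal : m (cube d c a) = ∫ x, f x :=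
    setIntegral_eq_integral_of_forall_compl_eq_zero fun _ hx =>
      Function.notMem_support.1 fun hxf => hx (hfsub hxf)
  obtain ⟨E⟩ := (CubePartition.stopping m Λ n c ha).nonempty_extension hd ha
  refine ⟨E.corner, E.side, E.side_pos, E.pairwise_disjoint, hfsub.trans E.subset_iUnion,
    E.forall_le hΛ.le (CubePartition.stopping_cell_le ha hsmall) hout, fun p hp q hq hqΛ => ?_⟩
  have hadm := isAdmissible_two_pow hd hΛ hp hq hqΛ
  exact ⟨hadm.coveringConst_pos, E.coveringConst_mul_tsum_le hadm
    (fun _ => integral_nonneg hnonneg) hout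
    (fun c a ha => (sum_setIntegral_children hint c ha.le).ge) hsmall
    (hmass.trans_eq htotal.symm)⟩
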